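/- arXiv:2502.13112 — 5 statements merged into one kernel-verified Lean document; each statement's English description precedes it below -/
import Mathlib

section
/- Under (A1)–(A4), for any step size η > 0 and tightening parameter ρ ∈ [0, ε], the iterates x_1, …, x_T of the algorithm satisfy, for every point x* with g(x*) ≤ 0: ∑_{t=1}^T (f_t(x_t) − f_t(x*)) ≤ 2R²/η + (η/2)·G_f²·T + (G_f·ρ/σ)·T. -/
open scoped RealInnerProductSpace Classical

noncomputable def projBall {d : ℕ} (R : ℝ) (v : EuclideanSpace ℝ (Fin d)) :
    EuclideanSpace ℝ (Fin d) := (R / max R ‖v‖) • v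

def IsSubgradAt {d : ℕ} (g : EuclideanSpace ℝ (Fin d) → ℝ)
    (x s : EuclideanSpace ℝ (Fin d)) : Prop :=
  ∀ y, g x + ⟪s, y - x⟫ ≤ g y

theorem grad_ineq {d : ℕ} {f : EuclideanSpace ℝ (Fin d) → ℝ} (hf : ConvexOn ℝ Set.univ f)
    (hd : Differentiable ℝ f) (a b : EuclideanSpace ℝ (Fin d)) :
    f a + ⟪gradient f a, b - a⟫ ≤ f b := by
  have h1 : ConvexOn ℝ Set.univ (f ∘ (AffineMap.lineMap a b : ℝ →ᵃ[ℝ] EuclideanSpace ℝ (Fin d))) := by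
    simpa using hf.comp_affineMap (AffineMap.lineMap a b : ℝ →ᵃ[ℝ] EuclideanSpace ℝ (Fin d))
  have h2 : HasDerivAt (f ∘ (AffineMap.lineMap a b : ℝ →ᵃ[ℝ] EuclideanSpace ℝ (Fin d)))
      (fderiv ℝ f a (b - a)) 0 := by
    have h3 : HasFDerivAt f (fderiv ℝ f a)
        ((AffineMap.lineMap a b : ℝ →ᵃ[ℝ] EuclideanSpace ℝ (Fin d)) 0) := by
      simpa using (hd a).hasFDerivAt
    exact h3.comp_hasDerivAt (0 : ℝ) AffineMap.hasDerivAt_lineMap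
  have h4 := h1.le_slope_of_hasDerivAt (Set.mem_univ 0) (Set.mem_univ 1) zero_lt_one h2
  have h5 : ⟪gradient f a, b - a⟫ = fderiv ℝ f a (b - a) := by
    simp [gradient]
  rw [h5]
  simp [slope_def_field] at h4
  simp
  linarith

theorem proj_dist {d : ℕ} {R : ℝ} (hR : 0 < R) (v z : EuclideanSpace ℝ (Fin d)) (hz : ‖z‖ ≤ R) :
    ‖projBall R v - z‖ ^ 2 ≤ ‖v - z‖ ^ 2 := by
  unfold projBall
  rcases le_or_gt ‖v‖ R with h | h
  · rw [max_eq_left h, div_self hR.ne', one_smul]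
  · rw [max_eq_right h.le]
    have hv : 0 < ‖v‖ := hR.trans h
    set c := R / ‖v‖ with hc
    have hcR : c * ‖v‖ = R := by rw [hc]; field_simp
    have hc1 : c ≤ 1 := by rw [hc, div_le_one hv]; exact h.le
    have hin : ⟪v, z⟫ ≤ c * ‖v‖ ^ 2 := by
      have := real_inner_le_norm v z
      nlinarith
    rw [norm_sub_sq_real, norm_sub_sq_real, norm_smul, real_inner_smul_left, mul_pow,
      Real.norm_eq_abs, sq_abs]
    have h6 : 0 ≤ (1 - c) * (c * ‖v‖ ^ 2 - ⟪v, z⟫) :=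
      mul_nonneg (by linarith) (by linarith)
    have h7 : 0 ≤ (1 - c) ^ 2 * ‖v‖ ^ 2 := by positivity
    nlinarith

theorem proj_mem {d : ℕ} {R : ℝ} (hR : 0 < R) (v : EuclideanSpace ℝ (Fin d)) :
    ‖projBall R v‖ ≤ R := by
  unfold projBall
  have hm : 0 < max R ‖v‖ := lt_max_of_lt_left hR
  rw [norm_smul, Real.norm_eq_abs, abs_of_pos (div_pos hR hm), div_mul_eq_mul_div,
    div_le_iff₀ hm]
  exact mul_le_mul_of_nonneg_left (le_max_right _ _) hR.le

theorem polyak_dist {d : ℕ} (v s z x : EuclideanSpace ℝ (Fin d)) (a gx ρ : ℝ) (hs : s ≠ 0)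
    (ha : a = max (gx + ⟪s, v - x⟫ + ρ) 0) (hz : gx + ⟪s, z - x⟫ ≤ -ρ) :
    ‖v - (a / ‖s‖ ^ 2) • s - z‖ ^ 2 ≤ ‖v - z‖ ^ 2 := by
  have hn : 0 < ‖s‖ := norm_pos_iff.mpr hs
  have h0 : 0 ≤ a := ha ▸ le_max_right _ _
  have hin : ⟪s, v - z⟫ = ⟪s, v - x⟫ - ⟪s, z - x⟫ := by
    rw [← inner_sub_right]; congr 1; abel
  have hk : a * a ≤ a * ⟪s, v - z⟫ := by
    rcases le_total (gx + ⟪s, v - x⟫ + ρ) 0 with h | h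
    · rw [max_eq_right h] at ha; simp [ha]
    · rw [max_eq_left h] at ha
      exact mul_le_mul_of_nonneg_left (by linarith) h0
  have he : v - (a / ‖s‖ ^ 2) • s - z = (v - z) - (a / ‖s‖ ^ 2) • s := by abel
  rw [he, norm_sub_sq_real (v - z), norm_smul, real_inner_smul_right, mul_pow, Real.norm_eq_abs, sq_abs,
    real_inner_comm]
  have h1 : (a / ‖s‖ ^ 2) ^ 2 * ‖s‖ ^ 2 = a * a / ‖s‖ ^ 2 := by field_simp
  have h2 : a / ‖s‖ ^ 2 * ⟪s, v - z⟫ = a * ⟪s, v - z⟫ / ‖s‖ ^ 2 := by ring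
  rw [h1, h2]
  have h3 : a * a / ‖s‖ ^ 2 ≤ a * ⟪s, v - z⟫ / ‖s‖ ^ 2 := by gcongr
  have h4 : 0 ≤ a * a / ‖s‖ ^ 2 := by positivity
  linarith

theorem error_bound {d : ℕ} {ε σ : ℝ} (g : EuclideanSpace ℝ (Fin d) → ℝ)
    (hg : ConvexOn ℝ Set.univ g) (hσ : 0 < σ) (hε : 0 < ε) (hne : ∃ z, g z = -ε)
    (hA4 : ∀ z : EuclideanSpace ℝ (Fin d), g z = -ε → ∀ sz, IsSubgradAt g z sz → σ ≤ ‖sz‖)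
    (q : EuclideanSpace ℝ (Fin d)) (hq : g q ≤ 0) :
    ∃ p, g p ≤ -ε ∧ ‖p - q‖ ≤ ε / σ := by
  by_cases hqe : g q ≤ -ε
  · exact ⟨q, hqe, by simp; positivity⟩
  push Not at hqe
  have hcont : Continuous g := by
    rw [← continuousOn_univ]; exact hg.continuousOn isOpen_univ
  have hcl : IsClosed {z | g z ≤ -ε} := isClosed_le hcont continuous_const
  have hcv : Convex ℝ {z | g z ≤ -ε} := by
    simpa using hg.convex_le (-ε)
  obtain ⟨z0, hz0⟩ := hne
  obtain ⟨p, hp, hmin⟩ := exists_norm_eq_iInf_of_complete_convex ⟨z0, hz0.le⟩ hcl.isComplete hcv q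
  rw [norm_eq_iInf_iff_real_inner_le_zero hcv hp] at hmin
  have hp' : g p ≤ -ε := hp
  have hmin' : ∀ w, g w ≤ -ε → ⟪q - p, w - p⟫ ≤ 0 := fun w hw => hmin w hw
  have hcomb : ∀ (a b : ℝ) (w w' : EuclideanSpace ℝ (Fin d)), a + b = 1 →
      ⟪q - p, a • w + b • w' - p⟫ = a * ⟪q - p, w - p⟫ + b * ⟪q - p, w' - p⟫ := by
    intro a b w w' hab
    have : a • w + b • w' - p = a • (w - p) + b • (w' - p) := by
      have : p = (a + b) • p := by rw [hab, one_smul]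
      nth_rewrite 1 [this]
      module
    rw [this, inner_add_right, real_inner_smul_right, real_inner_smul_right]
  have hgc : ∀ (a b : ℝ) (w w' : EuclideanSpace ℝ (Fin d)), 0 ≤ a → 0 ≤ b → a + b = 1 →
      g (a • w + b • w') ≤ a * g w + b * g w' := fun a b w w' ha hb hab =>
    hg.2 (Set.mem_univ w) (Set.mem_univ w') ha hb hab
  have hqp : 0 < ‖q - p‖ := by
    rw [norm_pos_iff, sub_ne_zero]; rintro rfl; linarith
  have huq : ⟪q - p, q - p⟫ = ‖q - p‖ ^ 2 := real_inner_self_eq_norm_sq _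
  have hu0 : ∀ w, 0 ≤ ⟪q - p, w - p⟫ → -ε ≤ g w := by
    intro w hw
    by_contra hlt
    push Not at hlt
    have hA : 0 < -ε - g w := by linarith
    have hB : 0 < g q + ε := by linarith
    set A := -ε - g w with hAd
    set B := g q + ε with hBd
    have hab : B / (A + B) + A / (A + B) = 1 := by field_simp; ring
    have h1 := hgc (B / (A + B)) (A / (A + B)) w q (by positivity) (by positivity) hab
    have h2 := hcomb (B / (A + B)) (A / (A + B)) w q hab
    have h3 : B / (A + B) * g w + A / (A + B) * g q = -ε := by
      have : g w = -ε - A := by rw [hAd]; ring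
      have h' : g q = B - ε := by rw [hBd]; ring
      rw [this, h']; field_simp; ring
    have h4 := hmin' _ (h1.trans h3.le)
    rw [h2, huq] at h4
    have h5 : 0 < A / (A + B) * ‖q - p‖ ^ 2 := by positivity
    have h6 : 0 ≤ B / (A + B) * ⟪q - p, w - p⟫ := by positivity
    linarith
  have hgp : g p = -ε := le_antisymm hp' (hu0 p (by simp))
  set S : Set ℝ := {r | ∃ w, 0 < ⟪q - p, w - p⟫ ∧ r = (g w + ε) / ⟪q - p, w - p⟫} with hS
  have hSne : S.Nonempty := ⟨_, q, by rw [huq]; positivity, rfl⟩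
  have hSbd : BddBelow S := by
    refine ⟨0, ?_⟩
    rintro r ⟨w, hw, rfl⟩
    have := hu0 w hw.le
    exact div_nonneg (by linarith) hw.le
  set c := sInf S with hcdef
  have hc0 : 0 ≤ c := by
    apply le_csInf hSne
    rintro r ⟨w, hw, rfl⟩
    have := hu0 w hw.le
    exact div_nonneg (by linarith) hw.le
  have hsub : IsSubgradAt g p (c • (q - p)) := by
    intro w
    rw [real_inner_smul_left, hgp]
    rcases lt_trichotomy ⟪q - p, w - p⟫ 0 with h | h | h
    · have : (g w + ε) / ⟪q - p, w - p⟫ ≤ c := by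
        apply le_csInf hSne
        rintro r ⟨w', hw', rfl⟩
        set u := ⟪q - p, w - p⟫ with hu
        set u' := ⟪q - p, w' - p⟫ with hu'
        have hD : 0 < u' - u := by linarith
        have hab : u' / (u' - u) + (-u) / (u' - u) = 1 := by
          rw [← add_div, ← sub_eq_add_neg, div_self hD.ne']
        have h1 := hgc _ _ w w' (div_nonneg hw'.le hD.le)
          (div_nonneg (by linarith) hD.le) hab
        have h2 := hcomb _ _ w w' hab
        rw [← hu, ← hu'] at h2
        have h3 := hu0 _ (by rw [h2]; apply le_of_eq; ring)
        have h4 : 0 ≤ (u' * (g w + ε) + (-u) * (g w' + ε)) / (u' - u) := by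
          have : (u' * (g w + ε) + (-u) * (g w' + ε)) / (u' - u) =
            u' / (u' - u) * g w + (-u) / (u' - u) * g w' +
              (u' / (u' - u) + (-u) / (u' - u)) * ε := by ring
          rw [this, hab]; linarith
        have h5 : 0 ≤ u' * (g w + ε) + (-u) * (g w' + ε) := by
          by_contra hneg
          push Not at hneg
          exact absurd (div_neg_of_neg_of_pos hneg hD) (not_lt.mpr h4)
        rw [div_le_iff_of_neg h, div_mul_eq_mul_div, div_le_iff₀ hw']
        linarith
      rw [div_le_iff_of_neg h] at this
      linarith
    · have := hu0 w h.ge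
      rw [h]; linarith
    · have : c ≤ (g w + ε) / ⟪q - p, w - p⟫ := csInf_le hSbd ⟨w, h, rfl⟩
      rw [le_div_iff₀ h] at this
      linarith
  have hsig := hA4 p hgp _ hsub
  have hq2 := hsub q
  rw [norm_smul, Real.norm_eq_abs, abs_of_nonneg hc0] at hsig
  rw [real_inner_smul_left, huq, hgp] at hq2
  refine ⟨p, hp', ?_⟩
  rw [norm_sub_rev, le_div_iff₀ hσ]
  nlinarith

theorem stmt0 {d T : ℕ} (hT : 1 ≤ T)
    {R Gf Gg ε σ η ρ : ℝ}
    (g : EuclideanSpace ℝ (Fin d) → ℝ)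
    (f : ℕ → EuclideanSpace ℝ (Fin d) → ℝ)
    (x y s : ℕ → EuclideanSpace ℝ (Fin d))
    (hR : 0 < R) (hGf : 0 < Gf) (hGg : 0 < Gg)
    (hgconv : ConvexOn ℝ Set.univ g)
    (hA1 : {z : EuclideanSpace ℝ (Fin d) | g z ≤ 0} ⊆ Metric.closedBall 0 R)
    (hfconv : ∀ t ∈ Finset.Icc 1 T, ConvexOn ℝ Set.univ (f t))
    (hfdiff : ∀ t ∈ Finset.Icc 1 T, Differentiable ℝ (f t))
    (hA2 : ∀ t ∈ Finset.Icc 1 T, ∀ z ∈ Metric.closedBall (0 : EuclideanSpace ℝ (Fin d)) R,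
      ‖gradient (f t) z‖ ≤ Gf)
    (hA3 : ∀ z ∈ Metric.closedBall (0 : EuclideanSpace ℝ (Fin d)) R,
      ∀ sz, IsSubgradAt g z sz → ‖sz‖ ≤ Gg)
    (hσ : 0 < σ) (hε : 0 < ε) (hσGg : σ ≤ Gg)
    (hA4ne : ∃ z, g z = -ε)
    (hA4 : ∀ z : EuclideanSpace ℝ (Fin d), g z = -ε → ∀ sz, IsSubgradAt g z sz → σ ≤ ‖sz‖)
    (hη : 0 < η) (hρ0 : 0 ≤ ρ) (hρε : ρ ≤ ε)
    (hx1 : x 1 ∈ Metric.closedBall (0 : EuclideanSpace ℝ (Fin d)) R)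
    (hs : ∀ t ∈ Finset.Icc 1 T, IsSubgradAt g (x t) (s t))
    (hy : ∀ t ∈ Finset.Icc 1 T, y t = x t - η • gradient (f t) (x t))
    (hupd : ∀ t ∈ Finset.Icc 1 T,
      x (t + 1) = if s t ≠ 0 then
          projBall R (y t - ((max (g (x t) + ⟪s t, y t - x t⟫ + ρ) 0) / ‖s t‖ ^ 2) • s t)
        else projBall R (y t))
    :
    ∀ xstar : EuclideanSpace ℝ (Fin d), g xstar ≤ 0 →
      ∑ t ∈ Finset.Icc 1 T, (f t (x t) - f t xstar) ≤
        2 * R ^ 2 / η + η / 2 * Gf ^ 2 * T + Gf * ρ / σ * T := by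
  intro q hq
  obtain ⟨p, hp, hpq⟩ := error_bound g hgconv hσ hε hA4ne hA4 q hq
  have hl1 : ρ / ε ≤ 1 := (div_le_one hε).mpr hρε
  have hl0 : 0 ≤ ρ / ε := by positivity
  obtain ⟨z, hzd⟩ : ∃ z, z = (1 - ρ / ε) • q + (ρ / ε) • p := ⟨_, rfl⟩
  have hgz : g z ≤ -ρ := by
    have h1 := hgconv.2 (Set.mem_univ q) (Set.mem_univ p) (sub_nonneg.mpr hl1) hl0
      (by ring)
    rw [← hzd, smul_eq_mul, smul_eq_mul] at h1
    have h2 : ρ / ε * g p ≤ ρ / ε * (-ε) := mul_le_mul_of_nonneg_left hp hl0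
    have h3 : ρ / ε * (-ε) = -ρ := by field_simp
    have h4 : (1 - ρ / ε) * g q ≤ 0 := mul_nonpos_of_nonneg_of_nonpos (by linarith) hq
    linarith
  have hzq : ‖z - q‖ ≤ ρ / σ := by
    have : z - q = (ρ / ε) • (p - q) := by rw [hzd]; module
    rw [this, norm_smul, Real.norm_eq_abs, abs_of_nonneg hl0]
    calc ρ / ε * ‖p - q‖ ≤ ρ / ε * (ε / σ) := mul_le_mul_of_nonneg_left hpq hl0
      _ = ρ / σ := by field_simp
  have hzB : z ∈ Metric.closedBall (0 : EuclideanSpace ℝ (Fin d)) R :=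
    hA1 (by show g z ≤ 0; linarith)
  have hzR : ‖z‖ ≤ R := by simpa using hzB
  have hxB : ∀ t, 1 ≤ t → t ≤ T → ‖x t‖ ≤ R := by
    intro t h1 h2
    rcases Nat.lt_or_ge 1 t with h | h
    · obtain ⟨k, rfl⟩ : ∃ k, t = k + 1 := ⟨t - 1, by omega⟩
      rw [hupd k (Finset.mem_Icc.mpr ⟨by omega, by omega⟩)]
      split_ifs <;> exact proj_mem hR _
    · obtain rfl : t = 1 := le_antisymm h h1
      simpa using hx1
  have hstep : ∀ t ∈ Finset.Icc 1 T, f t (x t) - f t q ≤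
      (‖x t - z‖ ^ 2 - ‖x (t + 1) - z‖ ^ 2) / (2 * η) + η / 2 * Gf ^ 2 + Gf * ρ / σ := by
    intro t ht
    have htt := Finset.mem_Icc.mp ht
    have hxt : x t ∈ Metric.closedBall (0 : EuclideanSpace ℝ (Fin d)) R := by
      simpa using hxB t htt.1 htt.2
    have hd1 : ‖x (t + 1) - z‖ ^ 2 ≤ ‖y t - z‖ ^ 2 := by
      rw [hupd t ht]
      split_ifs with h
      · refine (proj_dist hR _ z hzR).trans ?_
        exact polyak_dist (y t) (s t) z (x t) _ (g (x t)) ρ h rfl ((hs t ht z).trans hgz)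
      · exact proj_dist hR _ z hzR
    have hd2 : ‖y t - z‖ ^ 2 = ‖x t - z‖ ^ 2 - 2 * (η * ⟪gradient (f t) (x t), x t - z⟫)
        + η ^ 2 * ‖gradient (f t) (x t)‖ ^ 2 := by
      have : y t - z = (x t - z) - η • gradient (f t) (x t) := by rw [hy t ht]; abel
      rw [this, norm_sub_sq_real, norm_smul, real_inner_smul_right, real_inner_comm, mul_pow,
        Real.norm_eq_abs, sq_abs]
    have hGx := hA2 t ht _ hxt
    have hGz := hA2 t ht _ hzB
    have hi1 := grad_ineq (hfconv t ht) (hfdiff t ht) (x t) z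
    have hi2 := grad_ineq (hfconv t ht) (hfdiff t ht) z q
    have hG2 : ‖gradient (f t) (x t)‖ ^ 2 ≤ Gf ^ 2 := by gcongr
    have hneg : ⟪gradient (f t) (x t), z - x t⟫ = -⟪gradient (f t) (x t), x t - z⟫ := by
      rw [← inner_neg_right, neg_sub]
    have hneg2 : ⟪gradient (f t) z, q - z⟫ = -⟪gradient (f t) z, z - q⟫ := by
      rw [← inner_neg_right, neg_sub]
    have hcs : ⟪gradient (f t) z, z - q⟫ ≤ Gf * (ρ / σ) :=
      (real_inner_le_norm _ _).trans (mul_le_mul hGz hzq (norm_nonneg _) hGf.le)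
    have hkey : ⟪gradient (f t) (x t), x t - z⟫ ≤
        (‖x t - z‖ ^ 2 - ‖x (t + 1) - z‖ ^ 2) / (2 * η) + η / 2 * Gf ^ 2 := by
      have : (‖x t - z‖ ^ 2 - ‖x (t + 1) - z‖ ^ 2) / (2 * η) + η / 2 * Gf ^ 2
        = (‖x t - z‖ ^ 2 - ‖x (t + 1) - z‖ ^ 2 + η ^ 2 * Gf ^ 2) / (2 * η) := by
        field_simp
      rw [this, le_div_iff₀ (by positivity)]
      have := mul_le_mul_of_nonneg_left hG2 (sq_nonneg η)
      linarith
    have : Gf * (ρ / σ) = Gf * ρ / σ := by ring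
    linarith
  have htel : ∀ n : ℕ, ∑ t ∈ Finset.Icc 1 n,
      ((‖x t - z‖ ^ 2 - ‖x (t + 1) - z‖ ^ 2) / (2 * η) + η / 2 * Gf ^ 2 + Gf * ρ / σ) =
      (‖x 1 - z‖ ^ 2 - ‖x (n + 1) - z‖ ^ 2) / (2 * η) + η / 2 * Gf ^ 2 * n + Gf * ρ / σ * n := by
    intro n
    induction n with
    | zero => simp
    | succ k ih =>
      rw [Finset.sum_Icc_succ_top (by omega), ih]
      push_cast
      ring
  refine (Finset.sum_le_sum hstep).trans ?_
  rw [htel T]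
  have h1 : ‖x 1 - z‖ ≤ 2 * R := by
    have := norm_sub_le (x 1) z
    have := hxB 1 le_rfl hT
    linarith
  have h2 : ‖x 1 - z‖ ^ 2 ≤ (2 * R) ^ 2 := by gcongr
  have h3 : (‖x 1 - z‖ ^ 2 - ‖x (T + 1) - z‖ ^ 2) / (2 * η) ≤ (2 * R) ^ 2 / (2 * η) := by
    gcongr
    have := sq_nonneg ‖x (T + 1) - z‖
    linarith
  have h4 : (2 * R) ^ 2 / (2 * η) = 2 * R ^ 2 / η := by field_simp
  linarith
end

section
/- Under (A1)–(A4), for any step size η > 0 and tightening parameter ρ ∈ [0, ε], the iterates x_1, …, x_T of the algorithm satisfy, for all t ∈ {1,…,T}: g(x_t) ≤ G_g·γ^{(t−1)/2}·dist(x_1, X_ρ) + η·G_g·G_f/(1 − √γ) − ρ. -/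
open scoped RealInnerProductSpace Classical

theorem aux_projBall {d : ℕ} {R : ℝ} (hR : 0 < R) (v z : EuclideanSpace ℝ (Fin d))
    (hz : ‖z‖ ≤ R) : ‖projBall R v - z‖ ≤ ‖v - z‖ := by
  unfold projBall
  rcases le_total ‖v‖ R with h | h
  · rw [max_eq_left h, div_self hR.ne', one_smul]
  · rw [max_eq_right h]
    have hv : 0 < ‖v‖ := lt_of_lt_of_le hR h
    set c := R / ‖v‖ with hc
    have hc0 : 0 < c := div_pos hR hv
    have hc1 : c ≤ 1 := (div_le_one hv).2 h
    have hcv : c * ‖v‖ = R := by rw [hc]; field_simp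
    have hin : ⟪v, z⟫ ≤ c * ‖v‖ ^ 2 := by
      calc ⟪v, z⟫ ≤ ‖v‖ * ‖z‖ := real_inner_le_norm v z
        _ ≤ ‖v‖ * R := by gcongr
        _ = c * ‖v‖ ^ 2 := by rw [← hcv]; ring
    refine (sq_le_sq₀ (norm_nonneg _) (norm_nonneg _)).1 ?_
    rw [norm_sub_sq_real, norm_sub_sq_real, real_inner_smul_left, norm_smul, mul_pow,
      Real.norm_of_nonneg hc0.le]
    nlinarith [mul_nonneg (sub_nonneg.2 hc1) (sub_nonneg.2 hin), mul_nonneg (mul_nonneg (sub_nonneg.2 hc1) (sub_nonneg.2 hc1)) (sq_nonneg ‖v‖)]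

theorem aux_halfspace {d : ℕ} (s v w : EuclideanSpace ℝ (Fin d)) (hs : s ≠ 0) (a b : ℝ)
    (hab : a - b = ⟪s, v - w⟫) :
    ‖(v - (max a 0 / ‖s‖ ^ 2) • s) - (w - (max b 0 / ‖s‖ ^ 2) • s)‖ ≤ ‖v - w‖ := by
  have hs0 : 0 < ‖s‖ := norm_pos_iff.2 hs
  have e : (v - (max a 0 / ‖s‖ ^ 2) • s) - (w - (max b 0 / ‖s‖ ^ 2) • s)
      = (v - w) - ((max a 0 - max b 0) / ‖s‖ ^ 2) • s := by
    rw [sub_div, sub_smul]; abel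
  rw [e]
  refine (sq_le_sq₀ (norm_nonneg _) (norm_nonneg _)).1 ?_
  rw [@norm_sub_sq_real _ _ _ (v - w), real_inner_smul_right, norm_smul, mul_pow, real_inner_comm,
    ← hab, Real.norm_eq_abs, sq_abs]
  have key : (max a 0 - max b 0) ^ 2 ≤ (max a 0 - max b 0) * (a - b) := by
    rcases le_total a 0 with h1 | h1 <;> rcases le_total b 0 with h2 | h2 <;>
      simp only [max_eq_left, max_eq_right, h1, h2] <;> nlinarith
  have : ((max a 0 - max b 0) / ‖s‖ ^ 2) ^ 2 * ‖s‖ ^ 2 = (max a 0 - max b 0) ^ 2 / ‖s‖ ^ 2 := by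
    field_simp
  rw [this]
  have h3 : (max a 0 - max b 0) ^ 2 / ‖s‖ ^ 2 ≤ (max a 0 - max b 0) * (a - b) / ‖s‖ ^ 2 := by
    gcongr
  have h4 : 0 ≤ (max a 0 - max b 0) ^ 2 / ‖s‖ ^ 2 := by positivity
  have h5 : (max a 0 - max b 0) / ‖s‖ ^ 2 * (a - b) = (max a 0 - max b 0) * (a - b) / ‖s‖ ^ 2 := by
    ring
  rw [h5]
  linarith

theorem aux_polyak {d : ℕ} (s x z : EuclideanSpace ℝ (Fin d)) (hs : s ≠ 0) {a Gg σ : ℝ}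
    (ha : a ≤ ⟪s, x - z⟫) (hGg : 0 < Gg) (hsG : ‖s‖ ≤ Gg) (hσ : 0 < σ) (hσG : σ ≤ Gg)
    (hD : σ * ‖x - z‖ ≤ max a 0) :
    ‖(x - (max a 0 / ‖s‖ ^ 2) • s) - z‖ ≤ Real.sqrt (1 - σ ^ 2 / Gg ^ 2) * ‖x - z‖ := by
  have hs0 : 0 < ‖s‖ := norm_pos_iff.2 hs
  have hγ : 0 ≤ 1 - σ ^ 2 / Gg ^ 2 := by
    rw [sub_nonneg, div_le_one (by positivity)]; gcongr
  have e : (x - (max a 0 / ‖s‖ ^ 2) • s) - z = (x - z) - (max a 0 / ‖s‖ ^ 2) • s := by abel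
  rw [e]
  refine (sq_le_sq₀ (norm_nonneg _) (by positivity)).1 ?_
  rw [@norm_sub_sq_real _ _ _ (x - z), real_inner_smul_right, norm_smul, mul_pow, real_inner_comm,
    Real.norm_eq_abs, sq_abs, mul_pow, Real.sq_sqrt hγ]
  set m := max a 0 with hm
  have hm0 : 0 ≤ m := le_max_right _ _
  have h1 : m * m ≤ m * ⟪s, x - z⟫ := by
    rcases le_total a 0 with h | h
    · simp [hm, h]
    · have : m = a := max_eq_left h
      exact mul_le_mul_of_nonneg_left (this ▸ ha) hm0
  have h2 : m * m / ‖s‖ ^ 2 ≤ m / ‖s‖ ^ 2 * ⟪s, x - z⟫ := by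
    rw [div_mul_eq_mul_div]; gcongr
  have h3 : (m / ‖s‖ ^ 2) ^ 2 * ‖s‖ ^ 2 = m * m / ‖s‖ ^ 2 := by field_simp
  have h4 : (σ * ‖x - z‖) ^ 2 / Gg ^ 2 ≤ m * m / ‖s‖ ^ 2 := by
    rw [← sq m]; gcongr
  have h5 : (1 - σ ^ 2 / Gg ^ 2) * ‖x - z‖ ^ 2 = ‖x - z‖ ^ 2 - (σ * ‖x - z‖) ^ 2 / Gg ^ 2 := by
    ring
  rw [h5, h3]
  linarith

/-- Error bound at level `-ε`. -/
theorem aux_eb {d : ℕ} (g : EuclideanSpace ℝ (Fin d) → ℝ) {ε σ : ℝ}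
    (hg : ConvexOn ℝ Set.univ g) (hcont : Continuous g)
    (hσ : 0 < σ) (hne : ∃ z, g z = -ε)
    (hA4 : ∀ z : EuclideanSpace ℝ (Fin d), g z = -ε → ∀ sz, IsSubgradAt g z sz → σ ≤ ‖sz‖)
    (x : EuclideanSpace ℝ (Fin d)) (hx : -ε < g x) :
    ∃ z, g z ≤ -ε ∧ σ * ‖x - z‖ ≤ g x + ε := by
  obtain ⟨z0, hz0⟩ : ∃ z, g z < -ε := by
    by_contra! hcon
    obtain ⟨p, hp⟩ := hne
    have := hA4 p hp 0 (fun y => by simpa [hp] using hcon y)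
    simp at this; linarith
  set K := {z | g z ≤ -ε} with hK
  have hKc : IsClosed K := isClosed_le hcont continuous_const
  have hKconv : Convex ℝ K := by
    have := hg.convex_le (-ε); simpa [hK] using this
  have hKne : K.Nonempty := ⟨z0, hz0.le⟩
  obtain ⟨z, hzK, hz⟩ := exists_norm_eq_iInf_of_complete_convex hKne hKc.isComplete hKconv x
  have hproj := (norm_eq_iInf_iff_real_inner_le_zero hKconv hzK).1 hz
  set u := x - z with hu
  have hu0 : 0 < ‖u‖ := by
    rw [norm_pos_iff, hu, sub_ne_zero]; rintro rfl; exact absurd hzK (not_le.2 hx)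
  -- lower and upper slopes
  have hsep : ∀ y1 y2, -ε < g y1 → g y2 < -ε →
      ⟪u, y1 - z⟫ / (g y1 + ε) ≤ ⟪u, y2 - z⟫ / (g y2 + ε) := by
    intro y1 y2 h1 h2
    have hp : 0 < g y1 + ε := by linarith
    have hq : 0 < -(g y2 + ε) := by linarith
    set p := g y1 + ε with hpd
    set q := -(g y2 + ε) with hqd
    have hpq : 0 < p + q := by linarith
    have hc := hg.2 (Set.mem_univ y1) (Set.mem_univ y2)
      (show 0 ≤ q / (p + q) by positivity) (show 0 ≤ p / (p + q) by positivity)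
      (by rw [← add_div, add_comm q p, div_self hpq.ne'])
    have hle : g ((q / (p + q)) • y1 + (p / (p + q)) • y2) ≤ -ε := by
      refine hc.trans (le_of_eq ?_)
      have e1 : g y1 = p - ε := by rw [hpd]; ring
      have e2 : g y2 = -q - ε := by rw [hqd]; ring
      rw [e1, e2]; simp only [smul_eq_mul]; field_simp; ring
    have hi := hproj _ hle
    have e3 : (q / (p + q)) • y1 + (p / (p + q)) • y2 - z
        = (q / (p + q)) • (y1 - z) + (p / (p + q)) • (y2 - z) := by
      have : z = (q / (p + q)) • z + (p / (p + q)) • z := by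
        rw [← add_smul, ← add_div, add_comm q p, div_self hpq.ne', one_smul]
      nth_rewrite 1 [this]
      simp only [smul_sub]; abel
    rw [e3, inner_add_right, real_inner_smul_right, real_inner_smul_right] at hi
    have e4 : g y2 + ε = -q := by rw [hqd]; ring
    rw [e4, div_neg, ← neg_div, div_le_div_iff₀ hp hq]
    have e5 : q / (p + q) * ⟪u, y1 - z⟫ + p / (p + q) * ⟪u, y2 - z⟫
      = (q * ⟪u, y1 - z⟫ + p * ⟪u, y2 - z⟫) / (p + q) := by ring
    rw [e5] at hi
    have := (div_nonpos_iff.1 hi)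
    rcases this with h | h
    · linarith [h.2]
    · nlinarith [h.1]
  set L : Set ℝ := (fun y => ⟪u, y - z⟫ / (g y + ε)) '' {y | -ε < g y} with hL
  have hbdd : BddAbove L := by
    refine ⟨⟪u, z0 - z⟫ / (g z0 + ε), ?_⟩
    rintro _ ⟨y, hy, rfl⟩
    exact hsep y z0 hy hz0
  have hLne : L.Nonempty := ⟨_, x, hx, rfl⟩
  set lam := sSup L with hlam
  have hxl : ‖u‖ ^ 2 / (g x + ε) ≤ lam := by
    have : ⟪u, x - z⟫ / (g x + ε) ≤ lam := le_csSup hbdd ⟨x, hx, rfl⟩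
    rwa [← hu, real_inner_self_eq_norm_sq] at this
  have hxe : 0 < g x + ε := by linarith
  have hlam0 : 0 < lam := lt_of_lt_of_le (by positivity) hxl
  have hmain : ∀ y, ⟪u, y - z⟫ ≤ lam * (g y + ε) := by
    intro y
    rcases lt_trichotomy (g y) (-ε) with h | h | h
    · have : lam ≤ ⟪u, y - z⟫ / (g y + ε) := by
        apply csSup_le hLne
        rintro _ ⟨y1, hy1, rfl⟩
        exact hsep y1 y hy1 h
      rwa [le_div_iff_of_neg (by linarith)] at this
    · have := hproj y h.le
      rw [h]; simpa using this
    · have : ⟪u, y - z⟫ / (g y + ε) ≤ lam := le_csSup hbdd ⟨y, h, rfl⟩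
      rwa [div_le_iff₀ (by linarith)] at this
  have hgz : g z = -ε := by
    refine le_antisymm hzK ?_
    have := hmain z
    simp at this
    have := nonneg_of_mul_nonneg_right this hlam0
    linarith
  have hsub : IsSubgradAt g z (lam⁻¹ • u) := by
    intro y
    rw [real_inner_smul_left, hgz]
    have := hmain y
    rw [← inv_mul_le_iff₀ hlam0] at this
    linarith
  have hσle := hA4 z hgz _ hsub
  rw [norm_smul, norm_inv, Real.norm_of_nonneg hlam0.le] at hσle
  refine ⟨z, hzK, ?_⟩
  calc σ * ‖u‖ ≤ lam⁻¹ * ‖u‖ * ‖u‖ := by gcongr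
    _ = lam⁻¹ * ‖u‖ ^ 2 := by ring
    _ ≤ g x + ε := by
      rw [inv_mul_le_iff₀ hlam0]; rwa [div_le_iff₀ hxe] at hxl

theorem aux_eb2 {d : ℕ} (g : EuclideanSpace ℝ (Fin d) → ℝ) {ε σ ρ : ℝ}
    (hg : ConvexOn ℝ Set.univ g) (hcont : Continuous g)
    (hσ : 0 < σ) (hne : ∃ z, g z = -ε)
    (hA4 : ∀ z : EuclideanSpace ℝ (Fin d), g z = -ε → ∀ sz, IsSubgradAt g z sz → σ ≤ ‖sz‖)
    (hρε : ρ ≤ ε) (x : EuclideanSpace ℝ (Fin d)) :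
    σ * Metric.infDist x {z | g z ≤ -ρ} ≤ max (g x + ρ) 0 := by
  rcases le_or_gt (g x) (-ρ) with h | h
  · rw [Metric.infDist_zero_of_mem (by exact h)]; simp
  · rw [max_eq_left (by linarith)]
    obtain ⟨z, hz, hd⟩ := aux_eb g hg hcont hσ hne hA4 x (by linarith)
    have hA : 0 < g x + ε := by linarith
    set θ := (g x + ρ) / (g x + ε) with hθ
    have hθ0 : 0 ≤ θ := div_nonneg (by linarith) hA.le
    have hθ1 : θ ≤ 1 := (div_le_one hA).2 (by linarith)
    have hθA : θ * (g x + ε) = g x + ρ := by rw [hθ]; field_simp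
    have hc := hg.2 (Set.mem_univ x) (Set.mem_univ z) 
      (show 0 ≤ 1 - θ by linarith) hθ0 (by ring)
    simp only [smul_eq_mul] at hc
    have hmem : (1 - θ) • x + θ • z ∈ {z | g z ≤ -ρ} := by
      show g _ ≤ -ρ
      nlinarith
    have h1 := Metric.infDist_le_dist_of_mem (x := x) hmem
    have e : x - ((1 - θ) • x + θ • z) = θ • (x - z) := by
      rw [sub_smul, one_smul, smul_sub]; abel
    rw [dist_eq_norm, e, norm_smul, Real.norm_of_nonneg hθ0] at h1
    calc σ * Metric.infDist x {z | g z ≤ -ρ} ≤ σ * (θ * ‖x - z‖) := by gcongr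
      _ = θ * (σ * ‖x - z‖) := by ring
      _ ≤ θ * (g x + ε) := by gcongr
      _ = _ := hθA

theorem stmt1 {d T : ℕ} (hT : 1 ≤ T)
    {R Gf Gg ε σ η ρ : ℝ}
    (g : EuclideanSpace ℝ (Fin d) → ℝ)
    (f : ℕ → EuclideanSpace ℝ (Fin d) → ℝ)
    (x y s : ℕ → EuclideanSpace ℝ (Fin d))
    (hR : 0 < R) (hGf : 0 < Gf) (hGg : 0 < Gg)
    (hgconv : ConvexOn ℝ Set.univ g)
    (hA1 : {z : EuclideanSpace ℝ (Fin d) | g z ≤ 0} ⊆ Metric.closedBall 0 R)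
    (hfconv : ∀ t ∈ Finset.Icc 1 T, ConvexOn ℝ Set.univ (f t))
    (hfdiff : ∀ t ∈ Finset.Icc 1 T, Differentiable ℝ (f t))
    (hA2 : ∀ t ∈ Finset.Icc 1 T, ∀ z ∈ Metric.closedBall (0 : EuclideanSpace ℝ (Fin d)) R,
      ‖gradient (f t) z‖ ≤ Gf)
    (hA3 : ∀ z ∈ Metric.closedBall (0 : EuclideanSpace ℝ (Fin d)) R,
      ∀ sz, IsSubgradAt g z sz → ‖sz‖ ≤ Gg)
    (hσ : 0 < σ) (hε : 0 < ε) (hσGg : σ ≤ Gg)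
    (hA4ne : ∃ z, g z = -ε)
    (hA4 : ∀ z : EuclideanSpace ℝ (Fin d), g z = -ε → ∀ sz, IsSubgradAt g z sz → σ ≤ ‖sz‖)
    (hη : 0 < η) (hρ0 : 0 ≤ ρ) (hρε : ρ ≤ ε)
    (hx1 : x 1 ∈ Metric.closedBall (0 : EuclideanSpace ℝ (Fin d)) R)
    (hs : ∀ t ∈ Finset.Icc 1 T, IsSubgradAt g (x t) (s t))
    (hy : ∀ t ∈ Finset.Icc 1 T, y t = x t - η • gradient (f t) (x t))
    (hupd : ∀ t ∈ Finset.Icc 1 T,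
      x (t + 1) = if s t ≠ 0 then
          projBall R (y t - ((max (g (x t) + ⟪s t, y t - x t⟫ + ρ) 0) / ‖s t‖ ^ 2) • s t)
        else projBall R (y t))
    :
    ∀ t ∈ Finset.Icc 1 T,
      g (x t) ≤ Gg * Real.sqrt (1 - σ ^ 2 / Gg ^ 2) ^ (t - 1) *
          Metric.infDist (x 1) {z : EuclideanSpace ℝ (Fin d) | g z ≤ -ρ} +
        η * Gg * Gf / (1 - Real.sqrt (1 - σ ^ 2 / Gg ^ 2)) - ρ := by
  have hcont : Continuous g := by
    rw [← continuousOn_univ]; exact hgconv.continuousOn isOpen_univ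
  set K := {z : EuclideanSpace ℝ (Fin d) | g z ≤ -ρ} with hK
  set q := Real.sqrt (1 - σ ^ 2 / Gg ^ 2) with hq
  have hq0 : 0 ≤ q := Real.sqrt_nonneg _
  have hq1 : q < 1 := by
    rw [hq, Real.sqrt_lt' one_pos]
    have : 0 < σ ^ 2 / Gg ^ 2 := by positivity
    linarith
  have hKcl : IsClosed K := isClosed_le hcont continuous_const
  have hKne : K.Nonempty := by
    obtain ⟨z, hz⟩ := hA4ne
    exact ⟨z, by show g z ≤ -ρ; linarith⟩
  have hKB : ∀ z ∈ K, ‖z‖ ≤ R := by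
    intro z hz
    have : z ∈ Metric.closedBall (0 : EuclideanSpace ℝ (Fin d)) R := hA1 (by
      have : g z ≤ -ρ := hz
      show g z ≤ 0
      linarith)
    simpa using this
  have hball : ∀ v : EuclideanSpace ℝ (Fin d), projBall R v ∈ Metric.closedBall 0 R := by
    intro v
    have hm : 0 < max R ‖v‖ := lt_of_lt_of_le hR (le_max_left _ _)
    rw [mem_closedBall_zero_iff, projBall, norm_smul, Real.norm_of_nonneg (by positivity),
      div_mul_eq_mul_div, div_le_iff₀ hm]
    exact mul_le_mul_of_nonneg_left (le_max_right _ _) hR.le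
  have hxB : ∀ t ∈ Finset.Icc 1 T, x t ∈ Metric.closedBall (0 : EuclideanSpace ℝ (Fin d)) R := by
    intro t ht
    rw [Finset.mem_Icc] at ht
    obtain ⟨n, rfl⟩ : ∃ n, t = n + 1 := ⟨t - 1, by omega⟩
    rcases Nat.eq_zero_or_pos n with rfl | hn
    · exact hx1
    · rw [hupd n (Finset.mem_Icc.2 ⟨hn, by omega⟩)]
      split_ifs <;> exact hball _
  have hstep : ∀ t ∈ Finset.Icc 1 T,
      Metric.infDist (x (t + 1)) K ≤ q * Metric.infDist (x t) K + η * Gf := by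
    intro t ht
    obtain ⟨z, hzK, hz⟩ := hKcl.exists_infDist_eq_dist hKne (x t)
    have hyx : ‖y t - x t‖ ≤ η * Gf := by
      rw [hy t ht, sub_sub_cancel_left, norm_neg, norm_smul, Real.norm_of_nonneg hη.le]
      exact mul_le_mul_of_nonneg_left (hA2 t ht _ (hxB t ht)) hη.le
    refine (Metric.infDist_le_dist_of_mem hzK).trans ?_
    rw [hz, dist_eq_norm, dist_eq_norm, hupd t ht]
    have heb := aux_eb2 g hgconv hcont hσ hA4ne hA4 hρε (x t)
    rw [← hK, hz, dist_eq_norm] at heb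
    have hst := hs t ht
    by_cases h0 : s t = 0
    · rw [if_neg (by simpa using h0)]
      refine (aux_projBall hR _ z (hKB z hzK)).trans ?_
      have hgx : g (x t) ≤ -ρ := by
        obtain ⟨p, hp⟩ := hA4ne
        have := hst p
        rw [h0, inner_zero_left] at this
        linarith
      have hxz : ‖x t - z‖ = 0 := by
        rw [← dist_eq_norm, ← hz]; exact Metric.infDist_zero_of_mem hgx
      have hxz' : x t = z := by rwa [norm_eq_zero, sub_eq_zero] at hxz
      rw [hxz, mul_zero, zero_add, ← hxz']
      exact hyx
    · rw [if_pos h0]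
      refine (aux_projBall hR _ z (hKB z hzK)).trans ?_
      have h1 := aux_halfspace (s t) (y t) (x t) h0 (g (x t) + ⟪s t, y t - x t⟫ + ρ)
        (g (x t) + ρ) (by ring)
      have h2 := aux_polyak (s t) (x t) z h0 (a := g (x t) + ρ) (by
        have h3 := hst z
        have h4 : g z ≤ -ρ := hzK
        rw [← neg_sub, inner_neg_right] at h3
        linarith) hGg (hA3 _ (hxB t ht) _ hst) hσ hσGg heb
      refine (norm_sub_le_norm_sub_add_norm_sub _
        (x t - (max (g (x t) + ρ) 0 / ‖s t‖ ^ 2) • s t) _).trans ?_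
      linarith
  have hC : ∀ n, n + 1 ≤ T → Metric.infDist (x (n + 1)) K ≤
      q ^ n * Metric.infDist (x 1) K + η * Gf / (1 - q) := by
    intro n
    have h1q : 0 < 1 - q := by linarith
    induction n with
    | zero =>
      intro _
      have : 0 ≤ η * Gf / (1 - q) := by positivity
      simpa using this
    | succ k ih =>
      intro hk
      have h1 := hstep (k + 1) (Finset.mem_Icc.2 ⟨by omega, by omega⟩)
      have h2 := mul_le_mul_of_nonneg_left (ih (by omega)) hq0
      have h3 : q * (η * Gf / (1 - q)) + η * Gf = η * Gf / (1 - q) := by field_simp; ring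
      rw [pow_succ]
      nlinarith
  intro t ht
  obtain ⟨z, hzK, hz⟩ := hKcl.exists_infDist_eq_dist hKne (x t)
  have h1 := hs t ht z
  have h2 : g z ≤ -ρ := hzK
  have h3 : g (x t) + ρ ≤ Gg * Metric.infDist (x t) K := by
    have h4 : ⟪s t, x t - z⟫ ≤ ‖s t‖ * ‖x t - z‖ := real_inner_le_norm _ _
    rw [← neg_sub, inner_neg_right] at h1
    have h5 : ‖s t‖ * ‖x t - z‖ ≤ Gg * ‖x t - z‖ := by
      gcongr; exact hA3 _ (hxB t ht) _ (hs t ht)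
    rw [hz, dist_eq_norm]
    linarith
  rw [Finset.mem_Icc] at ht
  have h6 := hC (t - 1) (by omega)
  rw [Nat.sub_add_cancel ht.1] at h6
  have h7 := mul_le_mul_of_nonneg_left h6 hGg.le
  have h8 : Gg * (q ^ (t - 1) * Metric.infDist (x 1) K + η * Gf / (1 - q))
    = Gg * q ^ (t - 1) * Metric.infDist (x 1) K + η * Gg * Gf / (1 - q) := by ring
  linarith
end

section
/- (Error bound.) Under (A3) and (A4), for every ρ ∈ [0, ε] and every x ∈ RB: dist(x, X_ρ) ≤ (1/σ)·[g(x) + ρ]_+. -/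
open scoped RealInnerProductSpace Classical

theorem stmt8 {d : ℕ} {R Gg ε σ : ℝ}
    (g : EuclideanSpace ℝ (Fin d) → ℝ)
    (hR : 0 < R) (hGg : 0 < Gg)
    (hgconv : ConvexOn ℝ Set.univ g)
    (hA3 : ∀ z ∈ Metric.closedBall (0 : EuclideanSpace ℝ (Fin d)) R,
      ∀ sz, IsSubgradAt g z sz → ‖sz‖ ≤ Gg)
    (hσ : 0 < σ) (hε : 0 < ε) (hσGg : σ ≤ Gg)
    (hA4ne : ∃ z, g z = -ε)
    (hA4 : ∀ z : EuclideanSpace ℝ (Fin d), g z = -ε → ∀ sz, IsSubgradAt g z sz → σ ≤ ‖sz‖) :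
    ∀ ρ : ℝ, 0 ≤ ρ → ρ ≤ ε →
      ∀ x ∈ Metric.closedBall (0 : EuclideanSpace ℝ (Fin d)) R,
        Metric.infDist x {z : EuclideanSpace ℝ (Fin d) | g z ≤ -ρ} ≤ 1 / σ * max (g x + ρ) 0 := by
  intro ρ hρ0 hρε x _
  rcases le_or_gt (g x) (-ρ) with hx | hx
  · rw [Metric.infDist_zero_of_mem (by exact hx)]
    positivity
  have hcont : Continuous g := by
    have := hgconv.continuousOn isOpen_univ
    exact continuousOn_univ.1 this
  -- convexity along segments
  have hseg : ∀ a b : EuclideanSpace ℝ (Fin d), ∀ t : ℝ, 0 ≤ t → t ≤ 1 →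
      g (a + t • (b - a)) ≤ (1 - t) * g a + t * g b := by
    intro a b t h0 h1
    have := hgconv.2 (Set.mem_univ a) (Set.mem_univ b) (sub_nonneg.2 h1) h0 (by ring)
    have e : a + t • (b - a) = (1 - t) • a + t • b := by module
    rw [e]; simpa using this
  set K : Set (EuclideanSpace ℝ (Fin d)) := {z | g z ≤ -ε} with hK
  have hKne : K.Nonempty := by
    obtain ⟨z, hz⟩ := hA4ne
    exact ⟨z, hz.le⟩
  have hKcl : IsClosed K := isClosed_le hcont continuous_const
  have hKcv : Convex ℝ K := by
    have := hgconv.convex_le (-ε)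
    simpa [hK] using this
  obtain ⟨p, hpK, hp⟩ := exists_norm_eq_iInf_of_complete_convex hKne hKcl.isComplete hKcv x
  rw [norm_eq_iInf_iff_real_inner_le_zero hKcv hpK] at hp
  set u := x - p with hu
  have hgp' : g p ≤ -ε := hpK
  have hu0 : u ≠ 0 := by
    intro h
    have : x = p := sub_eq_zero.1 h
    rw [this] at hx; linarith
  have hun : 0 < ‖u‖ := norm_pos_iff.2 hu0
  have hlx : 0 < ⟪u, u⟫ := by rw [real_inner_self_eq_norm_sq]; positivity
  have hgp : g p = -ε := by
    by_contra hne
    have hlt : g p < -ε := lt_of_le_of_ne hgp' hne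
    have hD : 0 < g x - g p := by linarith
    have ht0 : 0 < (-ε - g p) / (g x - g p) := div_pos (by linarith) hD
    have ht1 : (-ε - g p) / (g x - g p) ≤ 1 := by rw [div_le_one hD]; linarith
    have h1 := hseg p x _ ht0.le ht1
    have h2 : (-ε - g p) / (g x - g p) * (g x - g p) = -ε - g p := div_mul_cancel₀ _ hD.ne'
    have h3 := hp _ (show _ ∈ K from (show g _ ≤ -ε by
      refine h1.trans ?_; linarith))
    rw [add_sub_cancel_left, ← hu, real_inner_smul_right] at h3
    have := mul_pos ht0 hlx
    linarith
  have hpos : ∀ y, 0 < ⟪u, y - p⟫ → -ε < g y := by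
    intro y hy
    by_contra h
    have := hp y (not_lt.1 h)
    linarith
  have hnn : ∀ y, 0 ≤ ⟪u, y - p⟫ → -ε ≤ g y := by
    intro y hy
    by_contra! h
    have hD : 0 < g x - g y := by linarith
    have ht0 : 0 < (-ε - g y) / (g x - g y) := div_pos (by linarith) hD
    have ht1 : (-ε - g y) / (g x - g y) ≤ 1 := by rw [div_le_one hD]; linarith
    have h1 := hseg y x _ ht0.le ht1
    have h2 : (-ε - g y) / (g x - g y) * (g x - g y) = -ε - g y := div_mul_cancel₀ _ hD.ne'
    generalize (-ε - g y) / (g x - g y) = t at *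
    have h3 := hpos (y + t • (x - y)) (by
      have e : y + t • (x - y) - p = (1 - t) • (y - p) + t • u := by rw [hu]; module
      rw [e, inner_add_right, real_inner_smul_right, real_inner_smul_right]
      have := mul_pos ht0 hlx
      have := mul_nonneg (sub_nonneg.2 ht1) hy
      linarith)
    linarith
  have hcross : ∀ y z, ⟪u, y - p⟫ < 0 → 0 < ⟪u, z - p⟫ →
      (g y + ε) / ⟪u, y - p⟫ ≤ (g z + ε) / ⟪u, z - p⟫ := by
    intro y z hy hz
    set a := ⟪u, y - p⟫ with ha
    set b := ⟪u, z - p⟫ with hb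
    have hD : 0 < b - a := by linarith
    have ht0 : 0 ≤ (-a) / (b - a) := div_nonneg (by linarith) hD.le
    have ht1 : (-a) / (b - a) ≤ 1 := by rw [div_le_one hD]; linarith
    have h2 : (-a) / (b - a) * (b - a) = -a := div_mul_cancel₀ _ hD.ne'
    have h1 := hseg y z _ ht0 ht1
    generalize (-a) / (b - a) = t at *
    have h3 := hnn (y + t • (z - y)) (by
      have e : y + t • (z - y) - p = (1 - t) • (y - p) + t • (z - p) := by module
      rw [e, inner_add_right, real_inner_smul_right, real_inner_smul_right, ← ha, ← hb]
      linarith)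
    have h4 : 0 ≤ (1 - t) * (g y + ε) + t * (g z + ε) := by linarith
    have h5 : 0 ≤ (b - a) * ((1 - t) * (g y + ε) + t * (g z + ε)) := mul_nonneg hD.le h4
    have h6 : (b - a) * ((1 - t) * (g y + ε) + t * (g z + ε))
        = b * (g y + ε) - a * (g z + ε) := by
      linear_combination (g z - g y) * h2
    rw [le_div_iff₀ hz, div_mul_eq_mul_div, div_le_iff_of_neg hy]
    linarith
  obtain ⟨w, hw⟩ : ∃ w, g w < -ε := by
    by_contra! h
    have := hA4 p hgp 0 (fun y => by simpa [hgp] using h y)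
    rw [norm_zero] at this
    linarith
  have hlw : ⟪u, w - p⟫ < 0 := by
    by_contra! h
    have := hnn w h
    linarith
  set S : Set ℝ := {r | ∃ y, ⟪u, y - p⟫ < 0 ∧ r = (g y + ε) / ⟪u, y - p⟫} with hS
  have hSne : S.Nonempty := ⟨_, w, hlw, rfl⟩
  have hub : ∀ z, 0 < ⟪u, z - p⟫ → ∀ r ∈ S, r ≤ (g z + ε) / ⟪u, z - p⟫ := by
    rintro z hz r ⟨y, hy, rfl⟩
    exact hcross y z hy hz
  have hSb : BddAbove S := ⟨_, hub x hlx⟩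
  have hl0 : 0 ≤ sSup S :=
    (div_nonneg_of_nonpos (by linarith) hlw.le).trans (le_csSup hSb ⟨w, hlw, rfl⟩)
  have hsub : IsSubgradAt g p (sSup S • u) := by
    intro y
    rw [hgp, real_inner_smul_left]
    rcases lt_trichotomy ⟪u, y - p⟫ 0 with h | h | h
    · have := le_csSup hSb ⟨y, h, rfl⟩
      rw [div_le_iff_of_neg h] at this
      linarith
    · have := hnn y h.ge
      rw [h]; linarith
    · have := csSup_le hSne (hub y h)
      rw [le_div_iff₀ h] at this
      linarith
  have hn := hA4 p hgp _ hsub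
  rw [norm_smul, Real.norm_of_nonneg hl0] at hn
  have hx1 := hsub x
  rw [hgp, real_inner_smul_left, ← hu, real_inner_self_eq_norm_sq] at hx1
  have hmain : σ * ‖u‖ ≤ g x + ε := by
    have := mul_le_mul_of_nonneg_right hn hun.le
    nlinarith
  have hD : 0 < g x + ε := by linarith
  have ht0 : 0 ≤ (ε - ρ) / (g x + ε) := div_nonneg (by linarith) hD.le
  have ht1 : (ε - ρ) / (g x + ε) ≤ 1 := by rw [div_le_one hD]; linarith
  have h2 : (ε - ρ) / (g x + ε) * (g x + ε) = ε - ρ := div_mul_cancel₀ _ hD.ne'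
  have h1 := hseg p x _ ht0 ht1
  generalize (ε - ρ) / (g x + ε) = t at *
  have hmem : p + t • (x - p) ∈ {z : EuclideanSpace ℝ (Fin d) | g z ≤ -ρ} := by
    show g _ ≤ -ρ
    rw [hgp] at h1
    linarith
  refine (Metric.infDist_le_dist_of_mem hmem).trans ?_
  have e : x - (p + t • (x - p)) = (1 - t) • u := by rw [hu]; module
  rw [dist_eq_norm, e, norm_smul, Real.norm_of_nonneg (by linarith), max_eq_left (by linarith),
    one_div, inv_mul_eq_div, le_div_iff₀ hσ]
  have := mul_le_mul_of_nonneg_left hmain (sub_nonneg.2 ht1)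
  linarith
end

section
/- Let h : ℝ^d → ℝ be convex and G-Lipschitz, let S := {x : h(x) ≤ 0} be nonempty, and suppose there is σ > 0 such that every subgradient of h at every point x with h(x) = 0 has norm at least σ. Let x ∈ ℝ^d satisfy h(x) > 0 and let z be the unique point of S nearest to x in Euclidean distance. Then there exists a subgradient s_z of h at z with s_z ≠ 0 such that: (i) x − z = dist(x, S)·s_z/‖s_z‖; (ii) dist(x, S) ≤ h(x)/‖s_z‖; and (iii) for every subgradient s_x of h at x, ⟨s_x, s_z⟩ ≥ ‖s_z‖² and hence ‖s_x‖ ≥ ‖s_z‖. -/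
open scoped RealInnerProductSpace Classical

theorem stmt13 {d : ℕ} {G σ : ℝ}
    (h : EuclideanSpace ℝ (Fin d) → ℝ)
    (hconv : ConvexOn ℝ Set.univ h)
    (hLip : ∀ u v : EuclideanSpace ℝ (Fin d), |h u - h v| ≤ G * ‖u - v‖)
    (hSne : ∃ z : EuclideanSpace ℝ (Fin d), h z ≤ 0)
    (hσ : 0 < σ)
    (hbd : ∀ z : EuclideanSpace ℝ (Fin d), h z = 0 → ∀ sz, IsSubgradAt h z sz → σ ≤ ‖sz‖)
    (x z : EuclideanSpace ℝ (Fin d)) (hx : 0 < h x)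
    (hzS : h z ≤ 0)
    (hznear : ∀ w : EuclideanSpace ℝ (Fin d), h w ≤ 0 → dist x z ≤ dist x w) :
    ∃ sz : EuclideanSpace ℝ (Fin d), IsSubgradAt h z sz ∧ sz ≠ 0 ∧
      x - z = (Metric.infDist x {w : EuclideanSpace ℝ (Fin d) | h w ≤ 0} / ‖sz‖) • sz ∧
      Metric.infDist x {w : EuclideanSpace ℝ (Fin d) | h w ≤ 0} ≤ h x / ‖sz‖ ∧
      (∀ sx : EuclideanSpace ℝ (Fin d), IsSubgradAt h x sx →
        ‖sz‖ ^ 2 ≤ ⟪sx, sz⟫ ∧ ‖sz‖ ≤ ‖sx‖) := by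
  have hvne : x - z ≠ 0 := by
    intro hv
    rw [sub_eq_zero] at hv
    rw [hv] at hx
    linarith
  set v := x - z with hv
  have hvpos : 0 < ‖v‖ := norm_pos_iff.mpr hvne
  have key1 : ∀ w, h w ≤ 0 → ⟪v, w - z⟫ ≤ 0 := by
    intro w hw
    by_contra! hc
    set u := w - z with hu
    have hupos : 0 < ‖u‖ := by
      rw [norm_pos_iff]
      intro h0
      rw [h0, inner_zero_right] at hc
      exact lt_irrefl _ hc
    have hu2 : 0 < ‖u‖ ^ 2 := by positivity
    set t := min 1 (⟪v, u⟫ / ‖u‖ ^ 2) with ht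
    have ht0 : 0 < t := lt_min one_pos (div_pos hc hu2)
    have ht1 : t ≤ 1 := min_le_left _ _
    have ht2 : t * ‖u‖ ^ 2 ≤ ⟪v, u⟫ := by
      rw [← le_div_iff₀ hu2]
      exact min_le_right _ _
    have hcv := hconv.2 (Set.mem_univ z) (Set.mem_univ w) (sub_nonneg.mpr ht1) ht0.le (by ring)
    simp only [smul_eq_mul] at hcv
    have hle : h ((1 - t) • z + t • w) ≤ 0 := by
      nlinarith [mul_nonneg (sub_nonneg.mpr ht1) (neg_nonneg.mpr hzS),
        mul_nonneg ht0.le (neg_nonneg.mpr hw)]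
    have hn := hznear _ hle
    rw [dist_eq_norm, dist_eq_norm] at hn
    have he : x - ((1 - t) • z + t • w) = v - t • u := by
      rw [hv, hu]; module
    rw [he, ← hv] at hn
    have hsq : ‖v‖ ^ 2 ≤ ‖v - t • u‖ ^ 2 := by gcongr
    rw [norm_sub_sq_real v (t • u), inner_smul_right, norm_smul, Real.norm_eq_abs, abs_of_pos ht0] at hsq
    nlinarith [mul_le_mul_of_nonneg_left ht2 ht0.le, mul_pos ht0 hc]
  have key2 : ∀ w, h w < 0 → ⟪v, w - z⟫ < 0 := by
    intro w hw
    set ε := -h w / ((|G| + 1) * ‖v‖) with hε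
    have hG : 0 < |G| + 1 := by positivity
    have hε0 : 0 < ε := div_pos (by linarith) (by positivity)
    have hεe : (|G| + 1) * (ε * ‖v‖) = - h w := by
      rw [hε]; field_simp
    have hl := hLip (w + ε • v) w
    rw [add_sub_cancel_left, norm_smul, Real.norm_eq_abs, abs_of_pos hε0] at hl
    have h1 : G * (ε * ‖v‖) ≤ (|G| + 1) * (ε * ‖v‖) := by
      gcongr
      linarith [le_abs_self G]
    have h2 := key1 (w + ε • v) (by linarith [le_abs_self (h (w + ε • v) - h w)])
    have he : w + ε • v - z = (w - z) + ε • v := by module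
    rw [he, inner_add_right, inner_smul_right, real_inner_self_eq_norm_sq] at h2
    have : 0 < ε * ‖v‖ ^ 2 := by positivity
    linarith
  have hz0 : h z = 0 := by
    by_contra hne
    have := key2 z (lt_of_le_of_ne hzS hne)
    simp at this
  obtain ⟨w0, hw0⟩ : ∃ w, h w < 0 := by
    by_contra! hc
    have := hbd z hz0 0 (by intro y; simpa [hz0] using hc y)
    rw [norm_zero] at this
    linarith
  obtain ⟨l, hl1, hl2⟩ := exists_between_of_forall_le
    (s := {r : ℝ | ∃ y, ⟪v, y - z⟫ < 0 ∧ r = h y / ⟪v, y - z⟫})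
    (t := {r : ℝ | ∃ y, 0 < ⟪v, y - z⟫ ∧ r = h y / ⟪v, y - z⟫})
    ⟨_, w0, key2 w0 hw0, rfl⟩
    ⟨_, x, by rw [← hv, real_inner_self_eq_norm_sq]; positivity, rfl⟩ (by
      rintro _ ⟨y2, h2, rfl⟩ _ ⟨y1, h1, rfl⟩
      set a := ⟪v, y1 - z⟫ with ha
      set b := ⟪v, y2 - z⟫ with hb
      have hab : 0 < a - b := by linarith
      have hc1 : 0 ≤ -b / (a - b) := div_nonneg (by linarith) hab.le
      have hc2 : 0 ≤ a / (a - b) := div_nonneg h1.le hab.le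
      have hcv := hconv.2 (Set.mem_univ y1) (Set.mem_univ y2) hc1 hc2
        (by rw [← add_div, neg_add_eq_sub, div_self hab.ne'])
      simp only [smul_eq_mul] at hcv
      have hp : 0 ≤ h ((-b / (a - b)) • y1 + (a / (a - b)) • y2) := by
        by_contra! hc
        have h3 := key2 _ hc
        have he : (-b / (a - b)) • y1 + (a / (a - b)) • y2 - z
            = (-b / (a - b)) • (y1 - z) + (a / (a - b)) • (y2 - z) := by
          have : z = (-b / (a - b) + a / (a - b)) • z := by
            rw [← add_div, neg_add_eq_sub, div_self hab.ne', one_smul]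
          nth_rewrite 1 [this]
          module
        rw [he, inner_add_right, inner_smul_right, inner_smul_right, ← ha, ← hb] at h3
        have : -b / (a - b) * a + a / (a - b) * b = 0 := by ring
        linarith
      have h4 : 0 ≤ (-b * h y1 + a * h y2) / (a - b) := by
        have : (-b * h y1 + a * h y2) / (a - b)
          = -b / (a - b) * h y1 + a / (a - b) * h y2 := by ring
        linarith
      have h5 : 0 ≤ -b * h y1 + a * h y2 := by
        have := mul_nonneg h4 hab.le
        rwa [div_mul_cancel₀ _ hab.ne'] at this
      rw [le_div_iff₀ h1, div_mul_eq_mul_div, div_le_iff_of_neg h2]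
      linarith)
  have hlpos : 0 < l :=
    lt_of_lt_of_le (div_pos_of_neg_of_neg hw0 (key2 w0 hw0)) (hl1 ⟨w0, key2 w0 hw0, rfl⟩)
  have hlx : l * ‖v‖ ^ 2 ≤ h x := by
    have h0 : 0 < ⟪v, x - z⟫ := by rw [← hv, real_inner_self_eq_norm_sq]; positivity
    have := hl2 ⟨x, h0, rfl⟩
    rw [le_div_iff₀ h0, ← hv, real_inner_self_eq_norm_sq] at this
    exact this
  have hns : ‖l • v‖ = l * ‖v‖ := by rw [norm_smul, Real.norm_eq_abs, abs_of_pos hlpos]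
  have hd : Metric.infDist x {w : EuclideanSpace ℝ (Fin d) | h w ≤ 0} = ‖v‖ := by
    rw [hv, ← dist_eq_norm]
    have hm : z ∈ {w : EuclideanSpace ℝ (Fin d) | h w ≤ 0} := hzS
    apply le_antisymm (Metric.infDist_le_dist_of_mem hm)
    exact (Metric.le_infDist ⟨z, hm⟩).mpr fun {w} hw => hznear w hw
  refine ⟨l • v, ?_, smul_ne_zero hlpos.ne' hvne, ?_, ?_, ?_⟩
  · intro y
    rw [hz0, zero_add, real_inner_smul_left]
    rcases lt_trichotomy ⟪v, y - z⟫ 0 with h0 | h0 | h0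
    · have := hl1 ⟨y, h0, rfl⟩
      rwa [div_le_iff_of_neg h0] at this
    · rw [h0, mul_zero]
      by_contra! hc
      have := key2 y hc
      linarith
    · have := hl2 ⟨y, h0, rfl⟩
      rwa [le_div_iff₀ h0] at this
  · rw [hd, hns, smul_smul]
    have : ‖v‖ / (l * ‖v‖) * l = 1 := by field_simp
    rw [this, one_smul]
  · rw [hd, hns, le_div_iff₀ (by positivity)]
    linarith
  · intro sx hsx
    have h1 := hsx z
    have he : z - x = -v := by rw [hv]; abel
    rw [he, inner_neg_right, hz0] at h1
    have h2 : ‖l • v‖ ^ 2 ≤ ⟪sx, l • v⟫ := by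
      rw [hns, inner_smul_right]
      nlinarith
    refine ⟨h2, ?_⟩
    have h3 := real_inner_le_norm sx (l • v)
    have h4 : 0 < ‖l • v‖ := by rw [hns]; positivity
    nlinarith
end

section
/- (Cost of tightening the feasible set.) Let g : ℝ^d → ℝ be convex with X := {x : g(x) ≤ 0} ⊆ RB for some R > 0, and assume (A3) and (A4). Let each f_t : ℝ^d → ℝ (t = 1,…,T) be convex and differentiable with ‖∇f_t(x)‖ ≤ G_f for all x ∈ RB. Then for every ρ ∈ [0, ε] and every x* with g(x*) ≤ 0, there exists x' ∈ X_ρ such that ∑_{t=1}^T (f_t(x') − f_t(x*)) ≤ (G_f·ρ/σ)·T. -/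
open scoped RealInnerProductSpace Classical

theorem stmt15 {d T : ℕ} {R Gf Gg ε σ ρ : ℝ}
    (g : EuclideanSpace ℝ (Fin d) → ℝ)
    (f : ℕ → EuclideanSpace ℝ (Fin d) → ℝ)
    (hR : 0 < R) (hGf : 0 < Gf) (hGg : 0 < Gg)
    (hgconv : ConvexOn ℝ Set.univ g)
    (hX : {z : EuclideanSpace ℝ (Fin d) | g z ≤ 0} ⊆ Metric.closedBall 0 R)
    (hA3 : ∀ z ∈ Metric.closedBall (0 : EuclideanSpace ℝ (Fin d)) R,
      ∀ sz, IsSubgradAt g z sz → ‖sz‖ ≤ Gg)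
    (hσ : 0 < σ) (hε : 0 < ε) (hσGg : σ ≤ Gg)
    (hA4ne : ∃ z, g z = -ε)
    (hA4 : ∀ z : EuclideanSpace ℝ (Fin d), g z = -ε → ∀ sz, IsSubgradAt g z sz → σ ≤ ‖sz‖)
    (hfconv : ∀ t ∈ Finset.Icc 1 T, ConvexOn ℝ Set.univ (f t))
    (hfdiff : ∀ t ∈ Finset.Icc 1 T, Differentiable ℝ (f t))
    (hA2 : ∀ t ∈ Finset.Icc 1 T, ∀ z ∈ Metric.closedBall (0 : EuclideanSpace ℝ (Fin d)) R,
      ‖gradient (f t) z‖ ≤ Gf)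
    (hρ0 : 0 ≤ ρ) (hρε : ρ ≤ ε) :
    ∀ xstar : EuclideanSpace ℝ (Fin d), g xstar ≤ 0 →
      ∃ x' : EuclideanSpace ℝ (Fin d), g x' ≤ -ρ ∧
        ∑ t ∈ Finset.Icc 1 T, (f t x' - f t xstar) ≤ Gf * ρ / σ * T := by
  intro xs hxs
  by_cases hcase : g xs ≤ -ρ
  · refine ⟨xs, hcase, ?_⟩
    simp only [sub_self, Finset.sum_const_zero]
    positivity
  push Not at hcase
  have hcont : Continuous g := by
    have := hgconv.continuousOn isOpen_univ
    exact continuousOn_univ.mp this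
  obtain ⟨z0, hz0⟩ := hA4ne
  obtain ⟨p, hp, hproj⟩ : ∃ p, g p ≤ -ε ∧ ∀ w, g w ≤ -ε → ⟪xs - p, w - p⟫ ≤ 0 := by
    have hconv : Convex ℝ {z | g z ≤ -ε} := by
      have := hgconv.convex_le (-ε)
      simpa using this
    have hcl : IsClosed {z | g z ≤ -ε} := isClosed_le hcont continuous_const
    obtain ⟨p, hp, hmin⟩ := exists_norm_eq_iInf_of_complete_convex
      (K := {z | g z ≤ -ε}) ⟨z0, hz0.le⟩ hcl.isComplete hconv xs
    exact ⟨p, hp, (norm_eq_iInf_iff_real_inner_le_zero hconv hp).1 hmin⟩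
  set u := xs - p with hu
  have hune : u ≠ 0 := by
    intro h
    have : xs = p := sub_eq_zero.mp h
    rw [this] at hcase
    linarith
  have hupos : 0 < ⟪u, u⟫ := real_inner_self_pos.mpr hune
  have hstrict : ∀ y, g y < -ε → ⟪u, y - p⟫ < 0 := by
    intro y hy
    have h1 : Filter.Tendsto (fun t : ℝ => g (y + t • u)) (nhdsWithin 0 (Set.Ioi 0))
        (nhds (g y)) := by
      have : Continuous (fun t : ℝ => g (y + t • u)) := by fun_prop
      have h2 := this.tendsto 0
      simp only [zero_smul, add_zero] at h2
      exact h2.mono_left nhdsWithin_le_nhds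
    obtain ⟨t, ht, ht0⟩ := ((h1.eventually_lt_const hy).and self_mem_nhdsWithin).exists
    have h3 := hproj _ ht.le
    have h4 : y + t • u - p = (y - p) + t • u := by abel
    rw [h4, inner_add_right, inner_smul_right] at h3
    have : 0 < t * ⟪u, u⟫ := mul_pos ht0 hupos
    linarith
  have hgp : g p = -ε := by
    rcases hp.lt_or_eq with h | h
    · have := hstrict p h
      simp at this
    · exact h
  have hcross : ∀ y1 y2, ⟪u, y1 - p⟫ < 0 → 0 < ⟪u, y2 - p⟫ →
      (g y1 + ε) / ⟪u, y1 - p⟫ ≤ (g y2 + ε) / ⟪u, y2 - p⟫ := by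
    intro y1 y2 h1 h2
    set a := ⟪u, y1 - p⟫ with ha
    set b := ⟪u, y2 - p⟫ with hb
    have hba : 0 < b - a := by linarith
    have hsum : b / (b - a) + (-a) / (b - a) = 1 := by field_simp; ring
    have hc := hgconv.2 (Set.mem_univ y1) (Set.mem_univ y2)
      (div_nonneg h2.le hba.le) (div_nonneg (by linarith : 0 ≤ -a) hba.le) hsum
    have hz : ⟪u, ((b / (b - a)) • y1 + ((-a) / (b - a)) • y2) - p⟫ = 0 := by
      have : ((b / (b - a)) • y1 + ((-a) / (b - a)) • y2) - p
          = (b / (b - a)) • (y1 - p) + ((-a) / (b - a)) • (y2 - p) := by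
        have : p = (b / (b - a) + (-a) / (b - a)) • p := by rw [hsum, one_smul]
        nth_rewrite 1 [this]
        module
      rw [this, inner_add_right, inner_smul_right, inner_smul_right, ← ha, ← hb]
      ring
    have hge : -ε ≤ g ((b / (b - a)) • y1 + ((-a) / (b - a)) • y2) := by
      by_contra hlt
      push Not at hlt
      have := hstrict _ hlt
      linarith
    simp only [smul_eq_mul] at hc
    have h5 : -ε ≤ b / (b - a) * g y1 + -a / (b - a) * g y2 := hge.trans hc
    have h6 : -ε * (b - a) ≤ b * g y1 + -a * g y2 := by
      have := mul_le_mul_of_nonneg_right h5 hba.le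
      have e : (b / (b - a) * g y1 + -a / (b - a) * g y2) * (b - a)
        = b * g y1 + -a * g y2 := by field_simp
      linarith
    rw [div_le_iff_of_neg h1, div_mul_eq_mul_div, div_le_iff₀ h2]
    nlinarith
  obtain ⟨μ, hμ⟩ : ∃ μ : ℝ, ∀ y, g p + μ * ⟪u, y - p⟫ ≤ g y := by
    set A : Set ℝ := {r | ∃ y, ⟪u, y - p⟫ < 0 ∧ r = (g y + ε) / ⟪u, y - p⟫} with hA
    have hne : A.Nonempty := by
      refine ⟨_, p - u, ?_, rfl⟩
      have : p - u - p = -u := by abel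
      rw [this, inner_neg_right]
      linarith
    have hbd : BddAbove A := by
      refine ⟨(g xs + ε) / ⟪u, xs - p⟫, ?_⟩
      rintro r ⟨y, hy, rfl⟩
      exact hcross y xs hy hupos
    refine ⟨sSup A, fun y => ?_⟩
    rcases lt_trichotomy ⟪u, y - p⟫ 0 with h | h | h
    · have : (g y + ε) / ⟪u, y - p⟫ ≤ sSup A := le_csSup hbd ⟨y, h, rfl⟩
      rw [div_le_iff_of_neg h] at this
      linarith
    · rw [h]
      by_contra hlt
      push Not at hlt
      have := hstrict y (by linarith)
      linarith
    · have : sSup A ≤ (g y + ε) / ⟪u, y - p⟫ := by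
        apply csSup_le hne
        rintro r ⟨w, hw, rfl⟩
        exact hcross w y hw h
      rw [le_div_iff₀ h] at this
      linarith
  have hμ0 : 0 ≤ μ := by
    by_contra hneg
    push Not at hneg
    have : IsSubgradAt g p 0 := by
      intro y
      rw [inner_zero_left]
      by_contra hlt
      push Not at hlt
      have h1 := hstrict y (by linarith)
      have h2 := hμ y
      nlinarith [mul_pos_of_neg_of_neg hneg h1]
    have := hA4 p hgp 0 this
    rw [norm_zero] at this
    linarith
  have hsub : IsSubgradAt g p (μ • u) := by
    intro y
    rw [real_inner_smul_left]
    exact hμ y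
  have hs := hA4 p hgp _ hsub
  rw [norm_smul, Real.norm_of_nonneg hμ0] at hs
  have hdist : σ * ‖u‖ ≤ g xs + ε := by
    have h1 := hμ xs
    rw [← hu, real_inner_self_eq_norm_sq, hgp] at h1
    nlinarith [mul_le_mul_of_nonneg_right hs (norm_nonneg u)]
  have hden : 0 < g xs + ε := by linarith
  set θ := (g xs + ρ) / (g xs + ε) with hθ
  have hθ0 : 0 ≤ θ := div_nonneg (by linarith) hden.le
  have hθ1 : θ ≤ 1 := (div_le_one hden).2 (by linarith)
  have hθe : θ * (g xs + ε) = g xs + ρ := by rw [hθ]; field_simp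
  have hgx : g ((1 - θ) • xs + θ • p) ≤ -ρ := by
    have := hgconv.2 (Set.mem_univ xs) (Set.mem_univ p)
      (by linarith : 0 ≤ 1 - θ) hθ0 (by ring)
    simp only [smul_eq_mul, hgp] at this
    linarith
  refine ⟨(1 - θ) • xs + θ • p, hgx, ?_⟩
  have hnorm : ‖((1 - θ) • xs + θ • p) - xs‖ ≤ ρ / σ := by
    have : ((1 - θ) • xs + θ • p) - xs = -(θ • u) := by rw [hu]; module
    rw [this, norm_neg, norm_smul, Real.norm_of_nonneg hθ0, le_div_iff₀ hσ]
    nlinarith [mul_le_mul_of_nonneg_left hdist hθ0]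
  have hterm : ∀ t ∈ Finset.Icc 1 T,
      f t ((1 - θ) • xs + θ • p) - f t xs ≤ Gf * ρ / σ := by
    intro t ht
    have h1 := (convex_closedBall (0 : EuclideanSpace ℝ (Fin d)) R).norm_image_sub_le_of_norm_fderiv_le
      (𝕜 := ℝ) (f := f t) (C := Gf) (fun x _ => (hfdiff t ht) x)
      (fun x hx => by
        have := hA2 t ht x hx
        rwa [gradient, LinearIsometryEquiv.norm_map] at this)
      (hX hxs) (hX (show g ((1 - θ) • xs + θ • p) ≤ 0 by linarith))
    calc _ ≤ _ := Real.le_norm_self _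
      _ ≤ _ := h1
      _ ≤ Gf * (ρ / σ) := mul_le_mul_of_nonneg_left hnorm hGf.le
      _ = _ := by ring
  have := Finset.sum_le_card_nsmul _ _ _ hterm
  rw [Nat.card_Icc, nsmul_eq_mul, Nat.add_sub_cancel] at this
  linarith
end
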